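/- arXiv:2305.19934 — 4 statements merged into one kernel-verified Lean document; each statement's English description precedes it below -/
import Mathlib

section
/- Let Ω ⊂ ℝ^d be a bounded open set that is locally strongly star-shaped. Then the boundary ∂Ω has d-dimensional Lebesgue measure zero. -/
open Set MeasureTheory

noncomputable section

abbrev Euc (d : ℕ) := EuclideanSpace ℝ (Fin d)

/-- An open bounded set `Ω`, star-shaped with respect to `z ∈ Ω`, is strongly star-shaped
if the relative interior of each segment from `z` to a point of `∂Ω` is contained in `Ω`. -/
def IsStronglyStarShapedWrt {d : ℕ} (Ω : Set (Euc d)) (z : Euc d) : Prop :=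
  z ∈ Ω ∧ StarConvex ℝ z Ω ∧ ∀ x ∈ frontier Ω, openSegment ℝ z x ⊆ Ω

/-- A bounded open set is locally strongly star-shaped if each boundary point has an open
neighbourhood `O` such that `O ∩ Ω` is strongly star-shaped (with respect to some point). -/
def IsLocallyStronglyStarShaped {d : ℕ} (Ω : Set (Euc d)) : Prop :=
  ∀ x ∈ frontier Ω, ∃ O : Set (Euc d), IsOpen O ∧ x ∈ O ∧
    ∃ z : Euc d, IsStronglyStarShapedWrt (O ∩ Ω) z

theorem frontier_null_of_strong {d : ℕ} (U : Set (Euc d)) (z : Euc d) (hUo : IsOpen U)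
    (hUb : Bornology.IsBounded U) (h : IsStronglyStarShapedWrt U z) :
    volume (frontier U) = 0 := by
  obtain ⟨hz, hs, hf⟩ := h
  have hsub : ∀ t : ℝ, 0 < t → t < 1 → AffineMap.homothety z t '' closure U ⊆ U := by
    rintro t h0 h1 _ ⟨x, hx, rfl⟩
    have hseg : AffineMap.homothety z t x ∈ openSegment ℝ z x := by
      refine ⟨1 - t, t, by linarith, h0, by ring, ?_⟩
      simp only [AffineMap.homothety_apply, vsub_eq_sub, vadd_eq_add]
      module
    by_cases hxU : x ∈ U
    · exact hs.openSegment_subset hxU hseg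
    · exact hf x ⟨hx, by rwa [hUo.interior_eq]⟩ hseg
  have hle : volume (closure U) ≤ volume U := by
    have hev : ∀ᶠ t : ℝ in nhdsWithin 1 (Iio 1),
        ENNReal.ofReal |t ^ Module.finrank ℝ (Euc d)| * volume (closure U) ≤ volume U := by
      filter_upwards [Ioo_mem_nhdsLT (show (0:ℝ) < 1 by norm_num)] with t ht
      rw [← Measure.addHaar_image_homothety volume z t]
      exact measure_mono (hsub t ht.1 ht.2)
    have hfin : volume (closure U) ≠ ⊤ := hUb.closure.measure_lt_top.ne
    have hlim : Filter.Tendsto (fun t : ℝ =>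
        ENNReal.ofReal |t ^ Module.finrank ℝ (Euc d)| * volume (closure U))
        (nhdsWithin 1 (Iio 1)) (nhds (volume (closure U))) := by
      have h1 : Filter.Tendsto (fun t : ℝ => ENNReal.ofReal |t ^ Module.finrank ℝ (Euc d)|)
          (nhdsWithin 1 (Iio 1)) (nhds 1) := by
        have hc : Continuous (fun t : ℝ => ENNReal.ofReal |t ^ Module.finrank ℝ (Euc d)|) :=
          ENNReal.continuous_ofReal.comp (by fun_prop)
        have := hc.tendsto 1
        simp only [one_pow, abs_one, ENNReal.ofReal_one] at this
        exact this.mono_left nhdsWithin_le_nhds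
      have := ENNReal.Tendsto.mul_const h1 (b := volume (closure U)) (Or.inr hfin)
      simpa only [one_mul] using this
    exact le_of_tendsto hlim hev
  rw [hUo.frontier_eq, measure_diff subset_closure hUo.measurableSet.nullMeasurableSet
    hUb.measure_lt_top.ne]
  exact tsub_eq_zero_of_le hle

/-- **Lemma A.2.** A bounded open locally strongly star-shaped set
`Ω ⊂ ℝ^d` has boundary of `d`-dimensional Lebesgue measure zero. -/
theorem boundary_null_of_locallyStronglyStarShaped
    (d : ℕ) (Ω : Set (Euc d)) (hΩo : IsOpen Ω) (hΩb : Bornology.IsBounded Ω)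
    (hΩ : IsLocallyStronglyStarShaped Ω) :
    volume (frontier Ω) = 0 := by
  refine measure_null_of_locally_null _ fun x hx => ?_
  obtain ⟨O, hO, hxO, z, hz⟩ := hΩ x hx
  refine ⟨frontier Ω ∩ O, Filter.inter_mem self_mem_nhdsWithin
    (mem_nhdsWithin_of_mem_nhds (hO.mem_nhds hxO)), ?_⟩
  refine measure_mono_null ?_ (frontier_null_of_strong (O ∩ Ω) z (hO.inter hΩo)
    (hΩb.subset inter_subset_right) hz)
  rintro y ⟨hy, hyO⟩
  rw [hΩo.frontier_eq] at hy
  rw [(hO.inter hΩo).frontier_eq]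
  exact ⟨hO.inter_closure ⟨hyO, hy.1⟩, fun h => hy.2 h.2⟩

end
end

section
/- Let A ⊂ ℝ^d be a Lebesgue-measurable set such that the dilates (sA)_{s>0} are pairwise disjoint (i.e. sA ∩ tA = ∅ whenever 0 < s < t). Then A has d-dimensional Lebesgue measure zero. -/
open Set MeasureTheory
open scoped Pointwise

/-- If `A ⊂ ℝ^d` is Lebesgue-measurable and its dilates `(sA)_{s>0}` are
pairwise disjoint, then `A` has `d`-dimensional Lebesgue measure zero. -/
theorem measure_zero_of_dilates_disjoint
    (d : ℕ) (A : Set (EuclideanSpace ℝ (Fin d))) (hA : MeasurableSet A)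
    (hdisj : ∀ s t : ℝ, 0 < s → s < t → Disjoint (s • A) (t • A)) :
    volume A = 0 := by
  by_contra h
  have key := Measure.countable_meas_pos_of_disjoint_iUnion
    (μ := (volume : Measure (EuclideanSpace ℝ (Fin d))))
    (As := fun s : Ioi (0 : ℝ) => (s : ℝ) • A)
    (fun s => hA.const_smul₀ (s : ℝ))
    (by
      intro s t hst
      rcases lt_or_gt_of_ne (fun e => hst (Subtype.ext e) : (s : ℝ) ≠ t) with h1 | h1
      · exact hdisj s t s.2 h1
      · exact (hdisj t s t.2 h1).symm)
  have huniv : {s : Ioi (0 : ℝ) | 0 < volume ((s : ℝ) • A)} = univ := by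
    ext s
    have hs : (0 : ℝ) < s := s.2
    simp only [mem_ofPred_eq, mem_univ, iff_true]
    rw [Measure.addHaar_smul_of_nonneg _ hs.le]
    exact ENNReal.mul_pos (ENNReal.ofReal_pos.2 (pow_pos hs _)).ne' h
  rw [huniv, countable_univ_iff] at key
  have h2 : (Ioi (0 : ℝ)).Countable := key
  have h3 := Cardinal.le_aleph0_iff_set_countable.2 h2
  rw [Cardinal.mk_Ioi_real] at h3
  exact absurd h3 (not_le.2 Cardinal.aleph0_lt_continuum)
end

section
/- Let q ∈ (0,1) and set x_* := (1/q)^{1/q} (so that x_*^q = 1/q). Define the line t_q(s) := exp(x_*^q) · q · x_*^{q−1} · s. Then t_q(s) ≤ exp(s^q) for all s ≥ 0, with equality at s = x_*. -/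
/-- For `q ∈ (0,1)` let `x_* := (1/q)^{1/q}` (so `x_*^q = 1/q`) and let
`t_q(s) := exp(x_*^q) · q · x_*^{q−1} · s` be the tangent line through the origin. Then
`t_q(s) ≤ exp(s^q)` for all `s ≥ 0`, with equality at `s = x_*`. -/
theorem tangent_line_le_exp_rpow (q : ℝ) (hq0 : 0 < q) (hq1 : q < 1) :
    (∀ s : ℝ, 0 ≤ s →
      Real.exp (((1 / q) ^ (1 / q) : ℝ) ^ q) * q * ((1 / q) ^ (1 / q) : ℝ) ^ (q - 1) * s ≤
        Real.exp (s ^ q)) ∧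
    Real.exp (((1 / q) ^ (1 / q) : ℝ) ^ q) * q * ((1 / q) ^ (1 / q) : ℝ) ^ (q - 1) *
        ((1 / q) ^ (1 / q) : ℝ) =
      Real.exp (((1 / q) ^ (1 / q) : ℝ) ^ q) := by
  have hx : (0 : ℝ) < (1 / q) ^ (1 / q) := by positivity
  have hxq : ((1 / q) ^ (1 / q) : ℝ) ^ q = 1 / q := by
    rw [← Real.rpow_mul (by positivity), one_div_mul_cancel hq0.ne', Real.rpow_one]
  have hlog : Real.log ((1 / q) ^ (1 / q) : ℝ) = -(Real.log q) / q := by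
    rw [Real.log_rpow (by positivity), one_div, Real.log_inv]
    ring
  generalize ((1 / q) ^ (1 / q) : ℝ) = x at hx hxq hlog ⊢
  have hx1 : x ^ (q - 1) = 1 / q / x := by
    rw [Real.rpow_sub_one hx.ne', hxq]
  rw [hx1, hxq]
  constructor
  · intro s hs
    rcases hs.eq_or_lt with rfl | hs
    · simp only [mul_zero]
      positivity
    have h1 : Real.exp (1 / q) * q * (1 / q / x) * s
        = Real.exp (1 / q + (Real.log s - Real.log x)) := by
      rw [Real.exp_add, Real.exp_sub, Real.exp_log hs, Real.exp_log hx]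
      field_simp
    rw [h1, Real.exp_le_exp, hlog]
    have hsq : 0 < s ^ q := Real.rpow_pos_of_pos hs q
    have h2 := Real.log_le_sub_one_of_pos (mul_pos hq0 hsq)
    rw [Real.log_mul hq0.ne' hsq.ne', Real.log_rpow hs] at h2
    have h3 : 1 / q + (Real.log s - -(Real.log q) / q)
        = (1 + (Real.log q + q * Real.log s)) / q := by
      field_simp
      ring
    rw [h3, div_le_iff₀ hq0]
    linarith
  · field_simp
end

section
/- Let α > 0 and define a(s) := exp(−s^{−α}) for s > 0. Then there exists a constant C depending only on α (one may take C = exp(α)) such that for all δ ∈ (0, 1/2] and all x₁ > 2 δ^{1/(α+1)}: a(x₁) ≤ C · a(x₁ − δ). -/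
/-- For `α > 0` and `a(s) := exp(−s^{−α})`, one has
`a(x₁) ≤ exp(α) · a(x₁ − δ)` for all `δ ∈ (0, 1/2]` and all `x₁ > 2 δ^{1/(α+1)}`
(i.e. the constant `C = exp(α)`, depending only on `α`, works). -/
theorem weight_stability_estimate (α : ℝ) (hα : 0 < α) :
    ∀ δ : ℝ, 0 < δ → δ ≤ 1 / 2 → ∀ x₁ : ℝ, 2 * δ ^ (1 / (α + 1)) < x₁ →
      Real.exp (-x₁ ^ (-α)) ≤ Real.exp α * Real.exp (-(x₁ - δ) ^ (-α)) := by
  intro δ hδ hδ2 x hx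
  rw [← Real.exp_add, Real.exp_le_exp]
  have h1 : δ ≤ δ ^ (1 / (α + 1)) := by
    have h := Real.rpow_le_rpow_of_exponent_ge hδ (by linarith : δ ≤ 1)
      (by rw [div_le_one (by linarith)]; linarith : 1 / (α + 1) ≤ 1)
    rwa [Real.rpow_one] at h
  obtain ⟨y, hy⟩ : ∃ y, y = x - δ := ⟨_, rfl⟩
  rw [← hy]
  have hxy : x = y + δ := by linarith
  have hy1 : δ ^ (1 / (α + 1)) < y := by linarith
  have hy0 : 0 < y := by linarith
  have h2 : δ ≤ y ^ (α + 1) := by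
    have h := Real.rpow_le_rpow (by positivity) hy1.le (by linarith : 0 ≤ α + 1)
    rwa [← Real.rpow_mul hδ.le, one_div, inv_mul_cancel₀ (by linarith), Real.rpow_one] at h
  have ht : 0 < x / y := div_pos (by linarith) hy0
  have h3 : 1 - α * (δ / y) ≤ (x / y) ^ (-α) := by
    rw [Real.rpow_def_of_pos ht]
    have e := Real.add_one_le_exp (Real.log (x / y) * -α)
    have l := Real.log_le_sub_one_of_pos ht
    have : x / y - 1 = δ / y := by rw [hxy]; field_simp; ring
    rw [this] at l
    nlinarith
  have h4 : x ^ (-α) = (x / y) ^ (-α) * y ^ (-α) := by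
    rw [← Real.mul_rpow ht.le hy0.le, div_mul_cancel₀ _ hy0.ne']
  have hp : 0 < y ^ (-α) := by positivity
  have h5 : δ / y * y ^ (-α) ≤ 1 := by
    rw [Real.rpow_neg hy0.le, ← div_eq_mul_inv, div_div, div_le_one (by positivity)]
    rwa [Real.rpow_add_one hy0.ne', mul_comm] at h2
  rw [h4]
  nlinarith [mul_le_mul_of_nonneg_right h3 hp.le, mul_le_mul_of_nonneg_left h5 hα.le]
end
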